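/- Every strongly complete partial order (scpo) is dominated: if D is a dcpo in which every irreducible subset has a supremum, then for every closed irreducible subset A of D, the collection ∇A is Scott-closed in D̂. -/

import Mathlib

namespace HoZhao

variable {α : Type*}

/-- A set is Scott-closed if it is a lower set and contains the supremum of each of its
nonempty directed subsets. -/
def ScottClosed [Preorder α] (S : Set α) : Prop :=
  IsLowerSet S ∧ ∀ d : Set α, d ⊆ S → d.Nonempty → DirectedOn (· ≤ ·) d →
    ∀ a : α, IsLUB d a → a ∈ S

/-- A nonempty set is irreducible if whenever it is covered by two Scott-closed sets it is
contained in one of them. -/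
def ScottIrred [Preorder α] (A : Set α) : Prop :=
  A.Nonempty ∧ ∀ B C : Set α, ScottClosed B → ScottClosed C → A ⊆ B ∪ C → A ⊆ B ∨ A ⊆ C

/-- A dcpo: every nonempty directed subset has a supremum. -/
def IsDcpo (α : Type*) [Preorder α] : Prop :=
  ∀ d : Set α, d.Nonempty → DirectedOn (· ≤ ·) d → ∃ a : α, IsLUB d a

/-- The order sobrification: the poset of Scott-closed irreducible subsets, ordered by
inclusion. -/
abbrev OrderSob (α : Type*) [Preorder α] :=
  {A : Set α // ScottClosed A ∧ ScottIrred A}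

/-- x' ≺ x : for every closed irreducible set A with x ≤ sup A, one has x' ∈ A. -/
def Prec [Preorder α] (x' x : α) : Prop :=
  ∀ A : Set α, ScottClosed A → ScottIrred A → ∀ a : α, IsLUB A a → x ≤ a → x' ∈ A

/-- A' ◁ A : A' is contained in ↓x for some x ∈ A. -/
def Tri [Preorder α] (A' A : OrderSob α) : Prop :=
  ∃ x ∈ (A : Set α), (A' : Set α) ⊆ {y : α | y ≤ x}

/-- ∇A = the collection of all A' ◁ A. -/
def Nabla [Preorder α] (A : OrderSob α) : Set (OrderSob α) := {A' | Tri A' A}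

/-- A dcpo is dominated if ∇A is Scott-closed in the order sobrification, for every A. -/
def Dominated (α : Type*) [Preorder α] : Prop :=
  ∀ A : OrderSob α, ScottClosed (Nabla A)

/-!
If `A'` has a supremum, then `A' ◁ A` holds exactly when `sup A' ∈ A`, so suprema turn `∇A` into
`A`: for directed `d ⊆ ∇A` the suprema of the members of `d` form a directed subset of `A`, whose
supremum `z` lies in `A` because `A` is Scott-closed. Every member of `d` lies below the principal
ideal `↓z`, hence so does the supremum of `d` in the order sobrification.
-/

section Preorder

variable [Preorder α]

theorem scottClosed_Iic (x : α) : ScottClosed (Set.Iic x) :=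
  ⟨isLowerSet_Iic x, fun _ hd _ _ _ ha => (isLUB_le_iff ha).2 hd⟩

theorem scottIrred_of_isGreatest {A : Set α} {x : α} (hx : IsGreatest A x) : ScottIrred A :=
  ⟨hx.nonempty, fun _ _ hB hC hA => (hA hx.1).imp
    (fun hxB _ hy => hB.1 (hx.2 hy) hxB) (fun hxC _ hy => hC.1 (hx.2 hy) hxC)⟩

/-- The principal ideal `↓x` as a point of the order sobrification. -/
def OrderSob.principal (x : α) : OrderSob α :=
  ⟨Set.Iic x, scottClosed_Iic x, scottIrred_of_isGreatest isGreatest_Iic⟩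

theorem tri_iff_exists_le_principal {A' A : OrderSob α} :
    Tri A' A ↔ ∃ x ∈ (A : Set α), A' ≤ OrderSob.principal x :=
  Iff.rfl

theorem Tri.bddAbove {A' A : OrderSob α} (h : Tri A' A) : BddAbove (A' : Set α) :=
  let ⟨x, _, hx⟩ := h
  ⟨x, hx⟩

theorem tri_iff_mem_of_isLUB {A' A : OrderSob α} {a : α} (ha : IsLUB (A' : Set α) a) :
    Tri A' A ↔ a ∈ (A : Set α) :=
  ⟨fun ⟨_, hxA, hx⟩ => A.2.1.1 ((isLUB_le_iff ha).2 hx) hxA, fun haA => ⟨a, haA, ha.1⟩⟩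

theorem isLowerSet_nabla (A : OrderSob α) : IsLowerSet (Nabla A) :=
  fun _ _ hCB ⟨x, hxA, hx⟩ => ⟨x, hxA, Set.Subset.trans hCB hx⟩

theorem directedOn_image_of_isLUB {ι : Type*} [Preorder ι] {d : Set ι} {f : ι → Set α}
    {s : ι → α} (hd : DirectedOn (· ≤ ·) d) (hf : MonotoneOn f d)
    (hs : ∀ i ∈ d, IsLUB (f i) (s i)) : DirectedOn (· ≤ ·) (s '' d) :=
  directedOn_image.2 <| hd.mono' fun i hi j hj hij => (hs i hi).mono (hs j hj) (hf hi hj hij)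

theorem le_principal_of_isLUB {d : Set (OrderSob α)} {S : OrderSob α}
    {s : OrderSob α → α} {z : α} (hS : IsLUB d S) (hs : ∀ B ∈ d, IsLUB (B : Set α) (s B))
    (hz : z ∈ upperBounds (s '' d)) : S ≤ OrderSob.principal z :=
  (isLUB_le_iff hS).2 fun B hB _ hy => ((hs B hB).1 hy).trans (hz ⟨B, hB, rfl⟩)

theorem scpo_dominated_general (hD : IsDcpo α)
    (hsup : ∀ A : Set α, ScottIrred A → BddAbove A → ∃ a : α, IsLUB A a) :
    Dominated α := by
  refine fun A => ⟨isLowerSet_nabla A, fun d hdA hne hdir S hS => ?_⟩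
  have : Nonempty α := A.2.2.1.to_type
  choose! s hs using fun (B : OrderSob α) (hB : B ∈ d) => hsup B B.2.2 (hdA hB).bddAbove
  have hsA : s '' d ⊆ (A : Set α) :=
    Set.image_subset_iff.2 fun B hB => (tri_iff_mem_of_isLUB (hs B hB)).1 (hdA hB)
  have hsdir : DirectedOn (· ≤ ·) (s '' d) :=
    directedOn_image_of_isLUB hdir (fun _ _ _ _ hBC => hBC) hs
  obtain ⟨z, hz⟩ := hD (s '' d) (hne.image s) hsdir
  have hzA : z ∈ (A : Set α) := A.2.1.2 _ hsA (hne.image s) hsdir z hz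
  exact tri_iff_exists_le_principal.2 ⟨z, hzA, le_principal_of_isLUB hS hs hz.1⟩

end Preorder

/-- every strongly complete partial order is dominated. -/
theorem scpo_dominated [PartialOrder α] (hD : IsDcpo α)
    (hscpo : ∀ A : Set α, ScottIrred A → ∃ a : α, IsLUB A a) :
    Dominated α :=
  scpo_dominated_general hD fun A hA _ => hscpo A hA

end HoZhao
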